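/- arXiv:math/0612527 — 2 statements merged into one kernel-verified Lean document; each statement's English description precedes it below -/
import Mathlib

section
/- Let n, j be integers with 1 ≤ j ≤ n/2, let Y_ν^{n−2j} ∈ H_{n−2j}^d, and define U_{j,ν}^n(x) = (1−‖x‖²)·P_{j−1}^{(1, n−2j+(d−2)/2)}(2‖x‖²−1)·Y_ν^{n−2j}(x). Then for all x ∈ ℝ^d, Δ U_{j,ν}^n(x) = −4j·(n−j+(d−2)/2)·P_{j−1}^{(1, n−2j+(d−2)/2)}(2‖x‖²−1)·Y_ν^{n−2j}(x). -/
open MvPolynomial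

noncomputable section

/-- Generalized binomial coefficient `C(z, k)` for real `z`. -/
def genBinom (z : ℝ) (k : ℕ) : ℝ := (∏ i ∈ Finset.range k, (z - i)) / (Nat.factorial k)

/-- The Jacobi polynomial `P_n^{(a,b)}`, normalized so that `P_n^{(a,b)}(1) = C(n+a, n)`. -/
def jacobiPoly (n : ℕ) (a b : ℝ) : Polynomial ℝ :=
  ∑ s ∈ Finset.range (n + 1),
    Polynomial.C (genBinom ((n : ℝ) + a) (n - s) * genBinom ((n : ℝ) + b) s) *
      (Polynomial.C (2⁻¹) * (Polynomial.X - 1)) ^ s *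
      (Polynomial.C (2⁻¹) * (Polynomial.X + 1)) ^ (n - s)

/-- The Laplace operator `Δ = ∑ ∂²/∂x_i²` on polynomials in `d` variables. -/
def mvLaplacian {d : ℕ} (p : MvPolynomial (Fin d) ℝ) : MvPolynomial (Fin d) ℝ :=
  ∑ i : Fin d, pderiv i (pderiv i p)

/-- The polynomial `‖x‖² = x₁² + ⋯ + x_d²`. -/
def sumSq (d : ℕ) : MvPolynomial (Fin d) ℝ := ∑ i : Fin d, X i ^ 2

open MvPolynomial in
theorem pd_sumSq (d : ℕ) (i : Fin d) : pderiv i (sumSq d) = 2 * X i := by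
  classical
  unfold sumSq
  rw [map_sum, Finset.sum_eq_single i]
  · rw [Derivation.leibniz_pow, pderiv_X_self]
    simp
  · intro k _ hk
    rw [Derivation.leibniz_pow, pderiv_X_of_ne hk]
    simp
  · simp

theorem lap_radial (d m : ℕ) (q : Polynomial ℝ) (Y : MvPolynomial (Fin d) ℝ)
    (hY : Y.IsHomogeneous m) (hh : mvLaplacian Y = 0) :
    mvLaplacian (Polynomial.aeval (sumSq d) q * Y) =
      (4 * sumSq d * Polynomial.aeval (sumSq d) q.derivative.derivative
        + (2 * d + 4 * m) * Polynomial.aeval (sumSq d) q.derivative) * Y := by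
  have hE : ∑ i, X i * pderiv i Y = m * Y := by
    rw [hY.sum_X_mul_pderiv]; simp
  have hp : ∀ (i : Fin d) (p : Polynomial ℝ), pderiv i (Polynomial.aeval (sumSq d) p)
      = Polynomial.aeval (sumSq d) p.derivative * (2 * X i) := by
    intro i p
    rw [Derivation.map_aeval, pd_sumSq, smul_eq_mul]
  have h2 : ∀ i : Fin d, pderiv i (2 : MvPolynomial (Fin d) ℝ) = 0 := by
    intro i
    exact (pderiv i).map_natCast 2
  have ht : ∀ i : Fin d, pderiv i (pderiv i (Polynomial.aeval (sumSq d) q * Y)) =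
      (4 * Polynomial.aeval (sumSq d) q.derivative.derivative * Y) * X i ^ 2
      + 2 * Polynomial.aeval (sumSq d) q.derivative * Y
      + (4 * Polynomial.aeval (sumSq d) q.derivative) * (X i * pderiv i Y)
      + Polynomial.aeval (sumSq d) q * pderiv i (pderiv i Y) := by
    intro i
    simp only [Derivation.leibniz, hp, map_add, smul_eq_mul, pderiv_X_self, h2]
    ring
  unfold mvLaplacian at hh ⊢
  simp only [ht, Finset.sum_add_distrib, ← Finset.mul_sum, hE, hh]
  simp only [Finset.sum_const, Finset.card_univ, Fintype.card_fin, nsmul_eq_mul]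
  change 4 * _ * Y * sumSq d + _ + _ + _ = _
  ring

theorem genBinom_succ (z : ℝ) (k : ℕ) : genBinom z (k + 1) * (k + 1) = genBinom z k * (z - k) := by
  unfold genBinom
  rw [Finset.prod_range_succ, Nat.factorial_succ]
  have := Nat.factorial_ne_zero k
  push_cast
  field_simp

/-- coefficients of the Jacobi sum with `a = 1` -/
def jc (N : ℕ) (b : ℝ) (s : ℕ) : ℝ := genBinom ((N : ℝ) + 1) (N - s) * genBinom ((N : ℝ) + b) s

theorem jc_rec (N : ℕ) (b : ℝ) (s : ℕ) (h : s < N) :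
    (s + 1) * (s + 2) * jc N b (s + 1) = jc N b s * ((N - s) * (N - s + b)) := by
  obtain ⟨k, rfl⟩ : ∃ k, N = s + 1 + k := ⟨N - (s + 1), by omega⟩
  unfold jc
  have e1 : s + 1 + k - (s + 1) = k := by omega
  have e2 : s + 1 + k - s = k + 1 := by omega
  rw [e1, e2]
  have h1 := genBinom_succ (((s + 1 + k : ℕ) : ℝ) + 1) k
  have h2 := genBinom_succ (((s + 1 + k : ℕ) : ℝ) + b) s
  generalize genBinom (((s + 1 + k : ℕ) : ℝ) + 1) k = p at *
  generalize genBinom (((s + 1 + k : ℕ) : ℝ) + 1) (k + 1) = p' at *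
  generalize genBinom (((s + 1 + k : ℕ) : ℝ) + b) s = r at *
  generalize genBinom (((s + 1 + k : ℕ) : ℝ) + b) (s + 1) = r' at *
  push_cast at *
  linear_combination (s + 2) * p * h2 - r * (k + 1 + b) * h1

/-- radial profile -/
def rp (N : ℕ) (b : ℝ) : Polynomial ℝ :=
  ∑ s ∈ Finset.range (N + 1),
    Polynomial.C (jc N b s) * (Polynomial.X - 1) ^ s * Polynomial.X ^ (N - s)

/-- telescoping term -/
def tg (N : ℕ) (b : ℝ) (s : ℕ) : Polynomial ℝ :=
  if s ≤ N then Polynomial.C (s * (s + 1) * jc N b s) * (Polynomial.X - 1) ^ (s - 1)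
    * Polynomial.X ^ (N - s) else 0

theorem tg_zero (N : ℕ) (b : ℝ) : tg N b 0 = 0 := by simp [tg]

theorem tg_last (N : ℕ) (b : ℝ) : tg N b (N + 1) = 0 := by simp [tg]

theorem tg_pred (N : ℕ) (b : ℝ) (s : ℕ) (h : s ≤ N) : tg N b (s + 1) =
    Polynomial.C (jc N b s * ((N - s) * (N - s + b))) * (Polynomial.X - 1) ^ s
    * Polynomial.X ^ (N - s - 1) := by
  rcases h.lt_or_eq with h | rfl
  · rw [← jc_rec N b s h, tg, if_pos (Nat.succ_le_of_lt h)]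
    have : N - (s + 1) = N - s - 1 := by omega
    rw [this]
    push_cast
    ring_nf
  · rw [tg_last]; simp

theorem term_ode (N : ℕ) (b : ℝ) (s : ℕ) (h : s ≤ N) :
    Polynomial.X * Polynomial.derivative (Polynomial.derivative ((1 - Polynomial.X) * (Polynomial.C (jc N b s) * (Polynomial.X - 1) ^ s * Polynomial.X ^ (N - s))))
      + Polynomial.C (b + 1) * Polynomial.derivative ((1 - Polynomial.X) * (Polynomial.C (jc N b s) * (Polynomial.X - 1) ^ s * Polynomial.X ^ (N - s)))
    = Polynomial.C (-(((N : ℝ) + 1) * (N + 1 + b))) * (Polynomial.C (jc N b s) * (Polynomial.X - 1) ^ s * Polynomial.X ^ (N - s))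
      + (tg N b (s + 1) - tg N b s) := by
  rw [tg_pred N b s h, tg, if_pos h]
  obtain ⟨k, rfl⟩ : ∃ k, N = s + k := ⟨N - s, by omega⟩
  have e1 : s + k - s = k := by omega
  rw [e1]
  generalize jc (s + k) b s = c
  have hr : (1 - Polynomial.X) * (Polynomial.C c * (Polynomial.X - 1) ^ s * Polynomial.X ^ k) = - (Polynomial.C c * ((Polynomial.X - 1) ^ (s + 1) * Polynomial.X ^ k)) := by
    ring
  rw [hr]
  have d1 : Polynomial.derivative (Polynomial.X - 1 : Polynomial ℝ) = 1 := by simp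
  rcases s with _ | s <;> rcases k with _ | _ | k <;>
  · simp only [Polynomial.derivative_neg, Polynomial.derivative_mul, Polynomial.derivative_C, Polynomial.derivative_pow, Polynomial.derivative_X, d1,
      Polynomial.derivative_add, map_mul, map_add, map_sub, map_neg, map_natCast, map_one, Polynomial.derivative_one,
      Polynomial.derivative_natCast, Nat.add_sub_cancel, Nat.zero_sub, pow_zero, zero_add]
    push_cast
    simp only [map_natCast, map_add, map_one, map_zero]
    ring

theorem rp_ode (N : ℕ) (b : ℝ) :
    Polynomial.X * Polynomial.derivative (Polynomial.derivative ((1 - Polynomial.X) * rp N b)) + Polynomial.C (b + 1) * Polynomial.derivative ((1 - Polynomial.X) * rp N b)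
    = Polynomial.C (-(((N : ℝ) + 1) * (N + 1 + b))) * rp N b := by
  have := Finset.sum_congr rfl (fun s hs =>
    term_ode N b s (Nat.lt_succ_iff.mp (Finset.mem_range.mp hs)))
  rw [Finset.sum_add_distrib, Finset.sum_add_distrib, Finset.sum_range_sub, tg_zero, tg_last,
    ← Finset.mul_sum, ← Finset.mul_sum, ← Finset.mul_sum, ← Polynomial.derivative_sum, ← Polynomial.derivative_sum,
    ← Finset.mul_sum] at this
  simpa [rp] using this

theorem aeval_jacobi {A : Type*} [CommRing A] [Algebra ℝ A] (N : ℕ) (b : ℝ) (y : A) :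
    Polynomial.aeval (2 * y - 1) (jacobiPoly N 1 b) = Polynomial.aeval y (rp N b) := by
  have h2 : algebraMap ℝ A 2⁻¹ * 2 = 1 := by
    have : (2 : A) = algebraMap ℝ A 2 := (map_ofNat (algebraMap ℝ A) 2).symm
    rw [this, ← map_mul, inv_mul_cancel₀ two_ne_zero, map_one]
  have e1 : algebraMap ℝ A 2⁻¹ * (2 * y - 1 - 1) = y - 1 := by
    linear_combination (y - 1) * h2
  have e2 : algebraMap ℝ A 2⁻¹ * (2 * y - 1 + 1) = y := by
    linear_combination y * h2
  simp only [jacobiPoly, rp, jc, map_sum, map_mul, map_pow, map_sub, map_add, map_one,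
    Polynomial.aeval_C, Polynomial.aeval_X, e1, e2]

/-- `Δ U_{j,ν}^n = -4j(n-j+(d-2)/2) P_{j-1}^{(1,n-2j+(d-2)/2)}(2‖x‖²-1) Y(x)`
where `U_{j,ν}^n(x) = (1-‖x‖²) P_{j-1}^{(1,n-2j+(d-2)/2)}(2‖x‖²-1) Y(x)` and `Y = Y_ν^{n-2j}`
is a harmonic polynomial, homogeneous of degree `n - 2j`. -/
theorem stmt1 (d : ℕ) (hd : 2 ≤ d) (n j : ℕ) (hj1 : 1 ≤ j) (hjn : 2 * j ≤ n)
    (Y : MvPolynomial (Fin d) ℝ) (hYhom : Y.IsHomogeneous (n - 2 * j))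
    (hYharm : mvLaplacian Y = 0)
    (U : MvPolynomial (Fin d) ℝ)
    (hU : U = (1 - sumSq d) *
        Polynomial.aeval (2 * sumSq d - 1)
          (jacobiPoly (j - 1) 1 ((n : ℝ) - 2 * (j : ℝ) + ((d : ℝ) - 2) / 2)) * Y) :
    ∀ x : Fin d → ℝ,
      eval x (mvLaplacian U) =
        -4 * (j : ℝ) * ((n : ℝ) - (j : ℝ) + ((d : ℝ) - 2) / 2) *
          Polynomial.eval (2 * ∑ i, x i ^ 2 - 1)
            (jacobiPoly (j - 1) 1 ((n : ℝ) - 2 * (j : ℝ) + ((d : ℝ) - 2) / 2)) *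
          eval x Y := by
  intro x
  obtain ⟨N, rfl⟩ : ∃ N, j = N + 1 := ⟨j - 1, by omega⟩
  obtain ⟨m, rfl⟩ : ∃ m, n = 2 * (N + 1) + m := ⟨n - 2 * (N + 1), by omega⟩
  have hm : 2 * (N + 1) + m - 2 * (N + 1) = m := by omega
  rw [hm] at hYhom
  have hN : N + 1 - 1 = N := by omega
  rw [hN] at hU ⊢
  set b : ℝ := ((2 * (N + 1) + m : ℕ) : ℝ) - 2 * ((N + 1 : ℕ) : ℝ) + ((d : ℝ) - 2) / 2 with hb
  have hb' : b = m + ((d : ℝ) - 2) / 2 := by rw [hb]; push_cast; ring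
  clear_value b
  have hq : U = Polynomial.aeval (sumSq d) ((1 - Polynomial.X) * rp N b) * Y := by
    rw [hU, aeval_jacobi]; simp
  have hJ : Polynomial.eval (2 * ∑ i, x i ^ 2 - 1) (jacobiPoly N 1 b)
      = Polynomial.eval (∑ i, x i ^ 2) (rp N b) := by
    have := aeval_jacobi N b (∑ i, x i ^ 2)
    simpa only [Polynomial.coe_aeval_eq_eval] using this
  have hev : ∀ p : Polynomial ℝ, eval x (Polynomial.aeval (sumSq d) p)
      = Polynomial.eval (∑ i, x i ^ 2) p := by
    intro p
    have h := Polynomial.aeval_algHom_apply (MvPolynomial.aeval x) (sumSq d) p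
    rw [← MvPolynomial.coe_aeval_eq_eval, RingHom.coe_coe, ← h, ← Polynomial.coe_aeval_eq_eval]
    simp [sumSq]
  have ho := congrArg (Polynomial.eval (∑ i, x i ^ 2)) (rp_ode N b)
  have hs : eval x (sumSq d) = ∑ i, x i ^ 2 := by simp [sumSq]
  rw [hJ, hq, lap_radial d m _ Y hYhom hYharm]
  generalize Polynomial.derivative ((1 - Polynomial.X) * rp N b) = q at *
  rw [Polynomial.eval_add, Polynomial.eval_mul, Polynomial.eval_mul, Polynomial.eval_mul,
    Polynomial.eval_C, Polynomial.eval_C, Polynomial.eval_X] at ho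
  rw [map_mul, map_add, map_mul, map_mul, map_mul, hev, hev, hs, map_add, map_mul, map_mul]
  simp only [map_natCast, map_ofNat]
  push_cast
  linear_combination 4 * eval x Y * ho - (4 * eval x Y * Polynomial.eval (∑ i, x i ^ 2) q
    + 4 * eval x Y * (N + 1) * Polynomial.eval (∑ i, x i ^ 2) (rp N b)) * hb'
end
end

section
/- Let λ ≥ 0 and define the inner product ⟨f,g⟩_S := (λ/ω_d)∫_{S^{d−1}} (d/dr)f(y)·(d/dr)g(y) dω(y) + (1/ω_d)∫_{S^{d−1}} f(y) g(y) dω(y), where (d/dr)f(y) denotes the derivative of t ↦ f(ty) at t = 1. Then for all degrees n, m and indices ν, μ, ⟨Y_ν^n, Y_μ^m⟩_S = (λn²+1)·δ_{n,m}·δ_{ν,μ}. In particular, the polynomials (λn²+1)^{−1/2}·Y_ν^n form an orthonormal family with respect to ⟨·,·⟩_S, and the space of homogeneous polynomials of degree n that are ⟨·,·⟩_S-orthogonal to all polynomials of lower degree is exactly H_n^d. -/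
open MeasureTheory Metric MvPolynomial RealInnerProductSpace

noncomputable section

/-- The Jacobi polynomial as a real function. -/
def jacobiR (n : ℕ) (a b x : ℝ) : ℝ := (jacobiPoly n a b).eval x

/-- `σ_m`, the dimension of the space of spherical harmonics of degree `m` in `d` variables. -/
def sigmaDim (d m : ℕ) : ℕ := (m + d - 1).choose (d - 1) - (m + d - 3).choose (d - 1)

/-- The surface area `ω_d = 2 π^{d/2} / Γ(d/2)` of the unit sphere `S^{d-1}`. -/
def omegaD (d : ℕ) : ℝ := 2 * Real.pi ^ ((d : ℝ) / 2) / Real.Gamma ((d : ℝ) / 2)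

/-- Euclidean space `ℝ^d`. -/
abbrev Edim (d : ℕ) := EuclideanSpace ℝ (Fin d)

/-- Evaluation of a polynomial in `d` variables at a point of `ℝ^d`. -/
def pEval {d : ℕ} (p : MvPolynomial (Fin d) ℝ) (x : Edim d) : ℝ := eval (fun i => x i) p

/-- The surface measure `dω` on the unit sphere `S^{d-1}`. -/
def sphMeasure (d : ℕ) : Measure (sphere (0 : Edim d) 1) :=
  (volume : Measure (Edim d)).toSphere

/-- The Sobolev inner product `⟨f,g⟩_I`. -/
def innerI (d : ℕ) (lam : ℝ) (f g : Edim d → ℝ) : ℝ :=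
  (lam / omegaD d) * ∫ x in closedBall (0 : Edim d) 1, ⟪gradient f x, gradient g x⟫ +
    (1 / omegaD d) * ∫ y : sphere (0 : Edim d) 1, f y * g y ∂(sphMeasure d)

/-- The Sobolev inner product `⟨f,g⟩_II`. -/
def innerII (d : ℕ) (lam : ℝ) (f g : Edim d → ℝ) : ℝ :=
  (lam / omegaD d) * ∫ x in closedBall (0 : Edim d) 1, ⟪gradient f x, gradient g x⟫ +
    f 0 * g 0

/-- The polynomials `U_{j,ν}^n`. -/
def Upoly (d : ℕ) (Y : (m : ℕ) → Fin (sigmaDim d m) → MvPolynomial (Fin d) ℝ)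
    (n j : ℕ) (ν : Fin (sigmaDim d (n - 2 * j))) : MvPolynomial (Fin d) ℝ :=
  if j = 0 then Y (n - 2 * j) ν
  else (1 - sumSq d) *
      Polynomial.aeval (2 * sumSq d - 1)
        (jacobiPoly (j - 1) 1 ((n : ℝ) - 2 * (j : ℝ) + ((d : ℝ) - 2) / 2)) *
      Y (n - 2 * j) ν


/-- The inner product `⟨f,g⟩_S` on the sphere, involving radial derivatives. -/
def innerS (d : ℕ) (lam : ℝ) (f g : Edim d → ℝ) : ℝ :=
  (lam / omegaD d) * ∫ y : sphere (0 : Edim d) 1,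
      deriv (fun t : ℝ => f (t • (y : Edim d))) 1 *
        deriv (fun t : ℝ => g (t • (y : Edim d))) 1 ∂(sphMeasure d) +
    (1 / omegaD d) * ∫ y : sphere (0 : Edim d) 1, f y * g y ∂(sphMeasure d)

namespace Stmt7Aux

open Set

variable {d : ℕ}

lemma pEval_continuous (p : MvPolynomial (Fin d) ℝ) : Continuous (pEval p) := by
  unfold pEval
  exact (MvPolynomial.continuous_eval p).comp (by fun_prop)

lemma pEval_mul (p q : MvPolynomial (Fin d) ℝ) (x : Edim d) :
    pEval (p * q) x = pEval p x * pEval q x := by simp [pEval]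

lemma pEval_add (p q : MvPolynomial (Fin d) ℝ) (x : Edim d) :
    pEval (p + q) x = pEval p x + pEval q x := by simp [pEval]

lemma pEval_smul_hom {p : MvPolynomial (Fin d) ℝ} {n : ℕ} (hp : p.IsHomogeneous n)
    (t : ℝ) (x : Edim d) : pEval p (t • x) = t ^ n * pEval p x := by
  unfold pEval
  rw [eval_eq', eval_eq', Finset.mul_sum]
  refine Finset.sum_congr rfl fun s hs => ?_
  have h := hp.degree_eq_sum_deg_support hs
  have h' : ∑ i, s i = n := by
    rw [h]; exact (Finset.sum_subset (Finset.subset_univ _) (by simp)).symm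
  simp only [PiLp.smul_apply, smul_eq_mul, mul_pow, Finset.prod_mul_distrib]
  rw [Finset.prod_pow_eq_pow_sum, h']
  ring

lemma hasLineDerivAt_pEval (p : MvPolynomial (Fin d) ℝ) (i : Fin d) (x : Edim d) :
    HasLineDerivAt ℝ (pEval p) (pEval (pderiv i p) x) x (EuclideanSpace.single i 1) := by
  unfold HasLineDerivAt
  induction p using MvPolynomial.induction_on with
  | C a => simpa [pEval] using hasDerivAt_const (0:ℝ) a
  | add p q hp hq =>
    have := hp.add hq
    simp only [map_add, pEval_add]
    exact this
  | mul_X p j hp =>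
    have hX : HasDerivAt (fun t : ℝ => (x + t • EuclideanSpace.single i (1:ℝ) : Edim d) j)
        ((Pi.single i (1:ℝ) : Fin d → ℝ) j) 0 := by
      have := ((hasDerivAt_id (0:ℝ)).mul_const ((Pi.single i (1:ℝ) : Fin d → ℝ) j)).const_add (x j)
      simpa [Pi.single_apply] using this
    have := hp.mul hX
    convert! this using 1
    · ext t
      simp [pEval]
    · simp [pEval, Derivation.leibniz, pderiv_X, Pi.single_apply]
      split_ifs <;> simp_all <;> ring

lemma hasLineDerivAt_w (i : Fin d) (x : Edim d) :
    HasLineDerivAt ℝ (fun x : Edim d => Real.exp (-‖x‖ ^ 2)) (-2 * x i * Real.exp (-‖x‖ ^ 2)) x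
      (EuclideanSpace.single i 1) := by
  unfold HasLineDerivAt
  have h1 : HasDerivAt (fun t : ℝ => x + t • (EuclideanSpace.single i (1:ℝ) : Edim d))
      (EuclideanSpace.single i (1:ℝ) : Edim d) 0 := by
    simpa using ((hasDerivAt_id (0:ℝ)).smul_const (EuclideanSpace.single i (1:ℝ) : Edim d)).const_add x
  have h2 := h1.norm_sq.neg.exp
  convert! h2 using 1
  simp [EuclideanSpace.inner_single_right]
  ring

/-- radial constant -/
def cR (d m : ℕ) : ℝ := ∫ r : Ioi (0:ℝ), (r:ℝ) ^ m * Real.exp (-(r:ℝ)^2) ∂(Measure.volumeIoiPow (d - 1))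

lemma radial_integrable (d m : ℕ) : Integrable (fun r : Ioi (0:ℝ) => (r:ℝ) ^ m * Real.exp (-(r:ℝ)^2))
    (Measure.volumeIoiPow (d - 1)) := by
  have h := integrableOn_rpow_mul_exp_neg_mul_sq (b := 1) one_pos (s := ((m + (d-1) : ℕ) : ℝ))
    (by have : (0:ℝ) ≤ ((m + (d-1) : ℕ) : ℝ) := Nat.cast_nonneg _
        linarith)
  rw [integrableOn_iff_comap_subtypeVal measurableSet_Ioi] at h
  unfold Measure.volumeIoiPow
  rw [integrable_withDensity_iff_integrable_smul' (by fun_prop) (by simp)]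
  refine h.congr (.of_forall ?_)
  rintro ⟨x, hx : 0 < x⟩
  simp (disch := positivity) only [Function.comp_apply, ENNReal.toReal_ofReal, smul_eq_mul, Real.rpow_natCast]
  rw [pow_add]; ring_nf

lemma cR_eq (d m : ℕ) (hd : 1 ≤ d) : cR d m = (1/2) * Real.Gamma (((m + d : ℕ) : ℝ) / 2) := by
  have h := integral_rpow_mul_exp_neg_rpow (p := 2) (q := ((m + (d-1) : ℕ) : ℝ)) two_pos
    (by have : (0:ℝ) ≤ ((m + (d-1) : ℕ) : ℝ) := Nat.cast_nonneg _
        linarith)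
  have e : (((m + (d-1) : ℕ) : ℝ) + 1) = ((m + d : ℕ) : ℝ) := by
    rw [← Nat.cast_add_one]; congr 1; omega
  rw [e] at h
  rw [← h]
  unfold cR Measure.volumeIoiPow
  simp only [ENNReal.ofReal]
  rw [integral_withDensity_eq_integral_smul,
        integral_subtype_comap measurableSet_Ioi fun a : ℝ ↦ Real.toNNReal (a ^ (d - 1)) • (a ^ m * Real.exp (-a^2)),
        setIntegral_congr_fun measurableSet_Ioi fun x hx ↦ ?_]
  · rw [NNReal.smul_def, Real.coe_toNNReal _ (pow_nonneg (le_of_lt hx) _), Real.rpow_natCast, pow_add,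
      smul_eq_mul, Real.rpow_two]; ring
  · exact (measurable_subtype_coe.pow_const _).real_toNNReal

lemma cR_pos (d m : ℕ) (hd : 1 ≤ d) : 0 < cR d m := by
  rw [cR_eq d m hd]
  have : (0:ℝ) < ((m + d : ℕ) : ℝ) := by exact_mod_cast (by omega)
  have := Real.Gamma_pos_of_pos (half_pos this)
  positivity

lemma cR_succ (d m : ℕ) (hd : 1 ≤ d) : 2 * cR d (m + 2) = (m + d : ℝ) * cR d m := by
  rw [cR_eq d _ hd, cR_eq d _ hd]
  have : (0:ℝ) < ((m + d : ℕ) : ℝ) := by exact_mod_cast (by omega)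
  have h := Real.Gamma_add_one (half_pos this).ne'
  have e : (((m + 2 + d : ℕ) : ℝ) / 2) = ((m + d : ℕ) : ℝ) / 2 + 1 := by push_cast; ring
  rw [e, h]; push_cast; ring

/-- integral over the sphere -/
def sI (p : MvPolynomial (Fin d) ℝ) : ℝ := ∫ y : sphere (0 : Edim d) 1, pEval p y ∂(sphMeasure d)

instance : IsFiniteMeasure (sphMeasure d) := by unfold sphMeasure; infer_instance

lemma sphere_integrable {f : Edim d → ℝ} (hf : Continuous f) :
    Integrable (fun y : sphere (0 : Edim d) 1 => f y) (sphMeasure d) := by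
  have hc : Continuous (fun y : sphere (0 : Edim d) 1 => f y) := hf.comp continuous_subtype_val
  have : CompactSpace (sphere (0 : Edim d) 1) := isCompact_iff_compactSpace.1 (isCompact_sphere _ _)
  exact hc.integrable_of_hasCompactSupport (HasCompactSupport.of_compactSpace _)

lemma polar_fun {p : MvPolynomial (Fin d) ℝ} {m : ℕ} (hp : p.IsHomogeneous m)
    (x : ({0}ᶜ : Set (Edim d))) :
    pEval p x * Real.exp (-‖(x : Edim d)‖ ^ 2) =
    (fun z : sphere (0 : Edim d) 1 × Ioi (0:ℝ) => pEval p z.1 * ((z.2:ℝ) ^ m * Real.exp (-(z.2:ℝ)^2)))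
      (homeomorphUnitSphereProd (Edim d) x) := by
  have hx : ‖(x : Edim d)‖ ≠ 0 := norm_ne_zero_iff.2 x.2
  simp only [homeomorphUnitSphereProd_apply_snd_coe, homeomorphUnitSphereProd_apply_fst_coe]
  rw [pEval_smul_hom hp, ← mul_assoc, mul_right_comm _ _ (‖(x : Edim d)‖ ^ m), ← mul_pow,
    inv_mul_cancel₀ hx]
  simp

lemma gauss_integrable {p : MvPolynomial (Fin d) ℝ} {m : ℕ} (hd : 1 ≤ d) (hp : p.IsHomogeneous m) :
    Integrable (fun x : Edim d => pEval p x * Real.exp (-‖x‖ ^ 2)) := by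
  have : Nonempty (Fin d) := ⟨⟨0, hd⟩⟩
  have : Nontrivial (Edim d) := inferInstance
  have h := (volume : Measure (Edim d)).measurePreserving_homeomorphUnitSphereProd.integrable_comp_emb
    (g := fun z : sphere (0 : Edim d) 1 × Ioi (0:ℝ) => pEval p z.1 * ((z.2:ℝ) ^ m * Real.exp (-(z.2:ℝ)^2)))
    (Homeomorph.measurableEmbedding _)
  rw [← restrict_compl_singleton (μ := volume) (0 : Edim d), ← IntegrableOn,
    integrableOn_iff_comap_subtypeVal (by measurability)]
  have e : ((fun x : Edim d => pEval p x * Real.exp (-‖x‖ ^ 2)) ∘ ((↑) : ({0}ᶜ : Set (Edim d)) → Edim d))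
    = _ := funext fun x => polar_fun hp x
  rw [e]
  refine h.2 ?_
  refine Integrable.mul_prod (f := fun y : sphere (0 : Edim d) 1 => pEval p y)
    (g := fun r : Ioi (0:ℝ) => (r:ℝ) ^ m * Real.exp (-(r:ℝ)^2))
    (sphere_integrable (pEval_continuous p)) (radial_integrable _ _)

lemma gauss_integral {p : MvPolynomial (Fin d) ℝ} {m : ℕ} (hd : 1 ≤ d) (hp : p.IsHomogeneous m) :
    ∫ x : Edim d, pEval p x * Real.exp (-‖x‖ ^ 2) = cR d m * sI p := by
  have : Nonempty (Fin d) := ⟨⟨0, hd⟩⟩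
  have : Nontrivial (Edim d) := inferInstance
  have h := (volume : Measure (Edim d)).measurePreserving_homeomorphUnitSphereProd.integral_comp
    (Homeomorph.measurableEmbedding _)
    (fun z : sphere (0 : Edim d) 1 × Ioi (0:ℝ) => pEval p z.1 * ((z.2:ℝ) ^ m * Real.exp (-(z.2:ℝ)^2)))
  rw [integral_prod_mul (fun y : sphere (0 : Edim d) 1 => pEval p y)
    (fun r : Ioi (0:ℝ) => (r:ℝ) ^ m * Real.exp (-(r:ℝ)^2))] at h
  have hf : Module.finrank ℝ (Edim d) = d := by simp
  rw [hf] at h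
  rw [mul_comm, cR, sI, sphMeasure, ← h]
  have r : ∫ x : Edim d, pEval p x * Real.exp (-‖x‖ ^ 2) =
      ∫ x in ({0}ᶜ : Set (Edim d)), pEval p x * Real.exp (-‖x‖ ^ 2) := by
    rw [restrict_compl_singleton]
  rw [r, ← integral_subtype_comap (measurableSet_singleton _).compl]
  exact integral_congr_ae (.of_forall fun x => polar_fun hp x)

lemma hom_zero_pderiv {h : MvPolynomial (Fin d) ℝ} (hh : h.IsHomogeneous 0) {i : Fin d} :
    pderiv i h = 0 := by
  rw [totalDegree_eq_zero_iff_eq_C.1 ((totalDegree_zero_iff_isHomogeneous _).2 hh), pderiv_C]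

lemma sI_pderiv {h : MvPolynomial (Fin d) ℝ} {m : ℕ} (hd : 1 ≤ d) (hh : h.IsHomogeneous m)
    (i : Fin d) : sI (pderiv i h) = (m + d - 1 : ℝ) * sI (X i * h) := by
  have h1 : (pderiv i h).IsHomogeneous (m - 1) := hh.pderiv
  have h2 : (X i * h).IsHomogeneous (m + 1) := by
    have := (isHomogeneous_X ℝ i).mul hh
    rwa [add_comm] at this
  have key := integral_bilinear_hasLineDerivAt_right_eq_neg_left_of_integrable
    (μ := (volume : Measure (Edim d))) (B := ContinuousLinearMap.mul ℝ ℝ)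
    (f := pEval h) (f' := pEval (pderiv i h)) (g := fun x : Edim d => Real.exp (-‖x‖ ^ 2))
    (g' := fun x => -2 * x i * Real.exp (-‖x‖ ^ 2)) (v := EuclideanSpace.single i 1)
    (gauss_integrable hd h1)
    (by
      have := (gauss_integrable hd h2).const_mul (-2)
      refine this.congr (.of_forall fun x => ?_)
      simp [pEval]; ring)
    (gauss_integrable hd hh)
    (fun x _ => hasLineDerivAt_pEval h i x) (fun x _ => hasLineDerivAt_w i x)
  simp only [ContinuousLinearMap.mul_apply'] at key
  rw [gauss_integral hd h1] at key
  have e : ∫ x : Edim d, pEval h x * (-2 * x i * Real.exp (-‖x‖ ^ 2)) =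
      -2 * ∫ x : Edim d, pEval (X i * h) x * Real.exp (-‖x‖ ^ 2) := by
    rw [← integral_const_mul]
    congr 1; ext x; simp [pEval]; ring
  rw [e, gauss_integral hd h2] at key
  rcases m with _ | m
  · rw [hom_zero_pderiv hh] at key ⊢
    have cp := cR_pos d 1 hd
    have : sI (X i * h) = 0 := by
      have z : sI (0 : MvPolynomial (Fin d) ℝ) = 0 := by simp [sI, pEval]
      rw [z] at key
      have : cR d 1 * sI (X i * h) = 0 := by simpa using key
      exact (mul_eq_zero.1 this).resolve_left cp.ne'
    rw [this]; simp [sI, pEval]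
  · have c := cR_succ d m hd
    have cp := cR_pos d m hd
    rw [Nat.add_sub_cancel] at key
    apply mul_left_cancel₀ cp.ne'
    push_cast
    linear_combination key + c * sI (X i * h)

/-- the sphere integral as a linear map -/
def sL (d : ℕ) : MvPolynomial (Fin d) ℝ →ₗ[ℝ] ℝ where
  toFun := sI
  map_add' p q := by
    unfold sI
    rw [← integral_add (sphere_integrable (pEval_continuous p)) (sphere_integrable (pEval_continuous q))]
    simp only [pEval_add]
  map_smul' c p := by
    unfold sI
    simp only [RingHom.id_apply, smul_eq_mul, ← integral_const_mul]
    congr 1; ext y; simp [pEval]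

lemma hom_mul_pderiv {f g : MvPolynomial (Fin d) ℝ} {n k : ℕ} (hf : f.IsHomogeneous n)
    (hg : g.IsHomogeneous k) (i : Fin d) : (f * pderiv i g).IsHomogeneous (n + k - 1) := by
  rcases k with _ | k
  · rw [hom_zero_pderiv hg, mul_zero]; exact isHomogeneous_zero _ _ _
  · exact hf.mul hg.pderiv

lemma lap_hom {g : MvPolynomial (Fin d) ℝ} {k : ℕ} (hg : g.IsHomogeneous k) :
    (mvLaplacian g).IsHomogeneous (k - 2) :=
  IsHomogeneous.sum _ _ _ fun _ _ => hg.pderiv.pderiv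

lemma lap_small {g : MvPolynomial (Fin d) ℝ} {k : ℕ} (hg : g.IsHomogeneous k) (hk : k < 2) :
    mvLaplacian g = 0 := by
  refine Finset.sum_eq_zero fun i _ => ?_
  have h : (pderiv i g).IsHomogeneous 0 := by
    have := hg.pderiv (i := i)
    rwa [show k - 1 = 0 by omega] at this
  exact hom_zero_pderiv h

lemma green {f g : MvPolynomial (Fin d) ℝ} {n k : ℕ} (hd : 1 ≤ d) (hf : f.IsHomogeneous n)
    (hg : g.IsHomogeneous k) :
    sL d (f * mvLaplacian g) - sL d (g * mvLaplacian f) =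
      ((k : ℝ) - n) * (n + k + d - 2) * sL d (f * g) := by
  by_cases h0 : n + k = 0
  · obtain ⟨rfl, rfl⟩ : n = 0 ∧ k = 0 := by omega
    rw [lap_small hf (by norm_num), lap_small hg (by norm_num)]; simp
  have hh : ∀ i, (f * pderiv i g - g * pderiv i f).IsHomogeneous (n + k - 1) := fun i =>
    (hom_mul_pderiv hf hg i).sub (by
      have := hom_mul_pderiv hg hf i
      rwa [add_comm k n] at this)
  have e1 : f * mvLaplacian g - g * mvLaplacian f =
      ∑ i, pderiv i (f * pderiv i g - g * pderiv i f) := by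
    simp only [mvLaplacian, Finset.mul_sum, ← Finset.sum_sub_distrib]
    refine Finset.sum_congr rfl fun i _ => ?_
    rw [map_sub, pderiv_mul, pderiv_mul]; ring
  have e2 : ∑ i, X i * (f * pderiv i g - g * pderiv i f) = ((k : ℝ) - n) • (f * g) := by
    have a := hf.sum_X_mul_pderiv
    have b := hg.sum_X_mul_pderiv
    have : ∑ i, X i * (f * pderiv i g - g * pderiv i f) =
      f * (∑ i, X i * pderiv i g) - g * ∑ i, X i * pderiv i f := by
      simp only [Finset.mul_sum, ← Finset.sum_sub_distrib]
      refine Finset.sum_congr rfl fun i _ => ?_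
      ring
    rw [this, a, b, sub_smul]
    simp only [← Nat.cast_smul_eq_nsmul ℝ, mul_smul_comm]
    rw [mul_comm g f]
  rw [← map_sub, e1, map_sum]
  have e3 : ∀ i, sL d (pderiv i (f * pderiv i g - g * pderiv i f)) =
      ((n : ℝ) + k + d - 2) * sL d (X i * (f * pderiv i g - g * pderiv i f)) := by
    intro i
    have := sI_pderiv hd (hh i) i
    change sI _ = _ * sI _
    rw [this, Nat.cast_sub (by omega)]
    push_cast; ring
  simp only [e3]
  rw [← Finset.mul_sum, ← map_sum, e2, map_smul, smul_eq_mul]; ring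

lemma harm_orth_hom {P : MvPolynomial (Fin d) ℝ} {n : ℕ} (hd : 2 ≤ d) (hP : P.IsHomogeneous n)
    (hL : mvLaplacian P = 0) (k : ℕ) : ∀ q : MvPolynomial (Fin d) ℝ, q.IsHomogeneous k → k < n →
      sL d (P * q) = 0 := by
  induction k using Nat.strong_induction_on with
  | _ k ih =>
    intro q hq hk
    have g := green (by omega) hP hq
    have z : sL d (P * mvLaplacian q) = 0 := by
      by_cases h2 : k < 2
      · rw [lap_small hq h2]; simp
      · exact ih (k - 2) (by omega) _ (lap_hom hq) (by omega)
    rw [z, hL, mul_zero, map_zero, sub_zero] at g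
    have h1 : ((k : ℝ) - n) ≠ 0 := by
      have : (k : ℝ) < n := by exact_mod_cast hk
      linarith
    have h2 : ((n : ℝ) + k + d - 2) ≠ 0 := by
      have a : (k : ℝ) < n := by exact_mod_cast hk
      have b : (2 : ℝ) ≤ d := by exact_mod_cast hd
      have c : (0 : ℝ) ≤ k := Nat.cast_nonneg _
      linarith
    exact (mul_eq_zero.1 g.symm).resolve_left (mul_ne_zero h1 h2)

lemma sL_sumSq (q : MvPolynomial (Fin d) ℝ) : sL d (sumSq d * q) = sL d q := by
  change sI _ = sI _
  unfold sI
  congr 1; ext y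
  have h : pEval (sumSq d) (y : Edim d) = 1 := by
    have h1 : ‖(y : Edim d)‖ ^ 2 = 1 := by simp
    rw [EuclideanSpace.norm_sq_eq] at h1
    simpa [pEval, sumSq] using h1
  rw [pEval_mul, h, one_mul]

lemma sumSq_hom : (sumSq d).IsHomogeneous 2 :=
  IsHomogeneous.sum _ _ _ fun i _ => isHomogeneous_X_pow i 2

lemma sL_sq_zero {q : MvPolynomial (Fin d) ℝ} {n : ℕ} (hd : 1 ≤ d) (hq : q.IsHomogeneous n)
    (h : sL d (q * q) = 0) : q = 0 := by
  have hi := gauss_integral hd (hq.mul hq)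
  have h' : sI (q * q) = 0 := h
  rw [h', mul_zero] at hi
  have hnn : 0 ≤ fun x : Edim d => pEval (q * q) x * Real.exp (-‖x‖ ^ 2) := fun x => by
    simp only [pEval_mul, Pi.zero_apply]
    exact mul_nonneg (mul_self_nonneg _) (Real.exp_pos _).le
  rw [integral_eq_zero_iff_of_nonneg hnn (gauss_integrable hd (hq.mul hq))] at hi
  have hc : Continuous (fun x : Edim d => pEval (q * q) x * Real.exp (-‖x‖ ^ 2)) :=
    (pEval_continuous _).mul (by fun_prop)
  have := (hc.ae_eq_iff_eq volume continuous_zero).1 hi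
  apply MvPolynomial.funext
  intro x
  have hx := congrFun this (WithLp.toLp 2 x)
  simpa [pEval, Real.exp_ne_zero] using hx

lemma deriv_hom {p : MvPolynomial (Fin d) ℝ} {n : ℕ} (hp : p.IsHomogeneous n) (y : Edim d) :
    HasDerivAt (fun t : ℝ => pEval p (t • y)) (n * pEval p y) 1 := by
  simp only [pEval_smul_hom hp]
  simpa using (hasDerivAt_pow n (1:ℝ)).mul_const (pEval p y)

lemma pEval_sum {ι : Type*} (s : Finset ι) (p : ι → MvPolynomial (Fin d) ℝ) (x : Edim d) :
    pEval (∑ i ∈ s, p i) x = ∑ i ∈ s, pEval (p i) x := by simp [pEval]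

/-- Euler operator through homogeneous components -/
def eul (p : MvPolynomial (Fin d) ℝ) : MvPolynomial (Fin d) ℝ :=
  ∑ k ∈ Finset.range (p.totalDegree + 1), (k : ℝ) • homogeneousComponent k p

lemma deriv_gen (p : MvPolynomial (Fin d) ℝ) (y : Edim d) :
    HasDerivAt (fun t : ℝ => pEval p (t • y)) (pEval (eul p) y) 1 := by
  have h := HasDerivAt.fun_sum (u := Finset.range (p.totalDegree + 1)) fun k _ =>
    deriv_hom (homogeneousComponent_isHomogeneous k p) y
  simp only [← pEval_sum, sum_homogeneousComponent] at h
  convert! h using 1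
  simp [eul, pEval]

lemma innerS_gen {P : MvPolynomial (Fin d) ℝ} {n : ℕ} (hP : P.IsHomogeneous n) (lam : ℝ)
    (p : MvPolynomial (Fin d) ℝ) : innerS d lam (pEval P) (pEval p) =
      lam / omegaD d * (n * sL d (P * eul p)) + 1 / omegaD d * sL d (P * p) := by
  unfold innerS
  simp only [(deriv_hom hP _).deriv, (deriv_gen p _).deriv]
  change _ = _ * (_ * sI _) + _ * sI _
  simp only [sI, pEval_mul, mul_assoc, integral_const_mul]

lemma innerS_hom {P p : MvPolynomial (Fin d) ℝ} {n k : ℕ} (hP : P.IsHomogeneous n)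
    (hp : p.IsHomogeneous k) (lam : ℝ) : innerS d lam (pEval P) (pEval p) =
      (lam * n * k + 1) * (1 / omegaD d * ∫ y : sphere (0 : Edim d) 1,
          pEval P y * pEval p y ∂(sphMeasure d)) := by
  unfold innerS
  simp only [(deriv_hom hP _).deriv, (deriv_hom hp _).deriv]
  have : ∀ y : Edim d, (n * pEval P y) * (k * pEval p y) = (n * k : ℝ) * (pEval P y * pEval p y) := by
    intro y; ring
  simp only [this, integral_const_mul]
  ring

lemma innerS_mul (lam a b : ℝ) (f g : Edim d → ℝ) :
    innerS d lam (fun x => a * f x) (fun x => b * g x) = a * b * innerS d lam f g := by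
  unfold innerS
  simp only [deriv_const_mul_field]
  have : ∀ u v : ℝ, (a * u) * (b * v) = (a * b) * (u * v) := by
    intro u v; ring
  simp only [this, integral_const_mul]
  ring

lemma omegaD_pos (hd : 1 ≤ d) : 0 < omegaD d := by
  have : (0:ℝ) < d := by exact_mod_cast hd
  have := Real.Gamma_pos_of_pos (half_pos this)
  unfold omegaD
  have := Real.pi_pos
  positivity

lemma part3 (hd : 2 ≤ d) (lam : ℝ) (hlam : 0 ≤ lam) (n : ℕ) (P : MvPolynomial (Fin d) ℝ)
    (hP : P.IsHomogeneous n) :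
    ((∀ p : MvPolynomial (Fin d) ℝ, p.totalDegree < n →
          innerS d lam (pEval P) (pEval p) = 0) ↔ mvLaplacian P = 0) := by
  constructor
  · intro h
    by_cases hn : n < 2
    · exact lap_small hP hn
    have hQ : (sumSq d * mvLaplacian P).IsHomogeneous n := by
      have := sumSq_hom.mul (lap_hom hP)
      rwa [show 2 + (n - 2) = n by omega] at this
    have hq := lap_hom hQ
    have h1 := h (mvLaplacian (sumSq d * mvLaplacian P))
      (lt_of_le_of_lt hq.totalDegree_le (by omega))
    rw [innerS_hom hP hq] at h1
    have hw := omegaD_pos (d := d) (by omega)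
    have hc : (lam * n * ((n - 2 : ℕ) : ℝ) + 1) ≠ 0 := by positivity
    have h2 : sL d (P * mvLaplacian (sumSq d * mvLaplacian P)) = 0 := by
      have := (mul_eq_zero.1 ((mul_eq_zero.1 h1).resolve_left hc)).resolve_left (by positivity)
      change sI _ = 0
      simp only [sI, pEval_mul]
      exact this
    have g := green (by omega) hP hQ
    rw [h2, mul_assoc, sL_sumSq] at g
    exact sL_sq_zero (by omega) (lap_hom hP) (by simpa using g)
  · intro hL p hp
    have hk : ∀ k ∈ Finset.range (p.totalDegree + 1), sL d (P * homogeneousComponent k p) = 0 := by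
      intro k hk
      have := Finset.mem_range.1 hk
      exact harm_orth_hom hd hP hL k _ (homogeneousComponent_isHomogeneous k p) (by omega)
    rw [innerS_gen hP]
    have a : sL d (P * eul p) = 0 := by
      simp only [eul, Finset.mul_sum, mul_smul_comm, map_sum, map_smul]
      exact Finset.sum_eq_zero fun k h => by rw [hk k h, smul_zero]
    have b : sL d (P * p) = 0 := by
      have e := sum_homogeneousComponent p
      conv_lhs => rw [← e]
      rw [Finset.mul_sum, map_sum]
      exact Finset.sum_eq_zero hk
    rw [a, b]; simp

end Stmt7Aux

/-- `⟨Y_ν^n, Y_μ^m⟩_S = (λn²+1)δ_{n,m}δ_{ν,μ}`; the normalized spherical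
harmonics `(λn²+1)^{-1/2} Y_ν^n` form an orthonormal family for `⟨·,·⟩_S`, and the space of
homogeneous polynomials of degree `n` that are `⟨·,·⟩_S`-orthogonal to all polynomials of
lower degree is exactly `H_n^d`. -/
theorem stmt7 (d : ℕ) (hd : 2 ≤ d) (lam : ℝ) (hlam : 0 ≤ lam)
    (Y : (m : ℕ) → Fin (sigmaDim d m) → MvPolynomial (Fin d) ℝ)
    (hYhom : ∀ m ν, (Y m ν).IsHomogeneous m)
    (hYharm : ∀ m ν, mvLaplacian (Y m ν) = 0)
    (hYon : ∀ (m k : ℕ) (ν : Fin (sigmaDim d m)) (μ : Fin (sigmaDim d k)),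
      (1 / omegaD d) * ∫ y : sphere (0 : Edim d) 1,
          pEval (Y m ν) y * pEval (Y k μ) y ∂(sphMeasure d) =
        if m = k ∧ (ν : ℕ) = (μ : ℕ) then 1 else 0)
    :
    (∀ (n m : ℕ) (ν : Fin (sigmaDim d n)) (μ : Fin (sigmaDim d m)),
      innerS d lam (pEval (Y n ν)) (pEval (Y m μ)) =
        if n = m ∧ (ν : ℕ) = (μ : ℕ) then lam * (n : ℝ) ^ 2 + 1 else 0) ∧
    (∀ (n m : ℕ) (ν : Fin (sigmaDim d n)) (μ : Fin (sigmaDim d m)),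
      innerS d lam
          (fun x => (Real.sqrt (lam * (n : ℝ) ^ 2 + 1))⁻¹ * pEval (Y n ν) x)
          (fun x => (Real.sqrt (lam * (m : ℝ) ^ 2 + 1))⁻¹ * pEval (Y m μ) x) =
        if n = m ∧ (ν : ℕ) = (μ : ℕ) then 1 else 0) ∧
    (∀ (n : ℕ) (P : MvPolynomial (Fin d) ℝ), P.IsHomogeneous n →
      ((∀ p : MvPolynomial (Fin d) ℝ, p.totalDegree < n →
          innerS d lam (pEval P) (pEval p) = 0) ↔ mvLaplacian P = 0)) := by
  have h1 : ∀ (n m : ℕ) (ν : Fin (sigmaDim d n)) (μ : Fin (sigmaDim d m)),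
      innerS d lam (pEval (Y n ν)) (pEval (Y m μ)) =
        if n = m ∧ (ν : ℕ) = (μ : ℕ) then lam * (n : ℝ) ^ 2 + 1 else 0 := by
    intro n m ν μ
    rw [Stmt7Aux.innerS_hom (hYhom n ν) (hYhom m μ), hYon]
    split_ifs with h
    · rw [h.1]; ring
    · simp
  refine ⟨h1, ?_, fun n P hP => Stmt7Aux.part3 hd lam hlam n P hP⟩
  intro n m ν μ
  rw [Stmt7Aux.innerS_mul, h1]
  split_ifs with h
  · obtain ⟨rfl, _⟩ := h
    have hp : 0 < lam * (n : ℝ) ^ 2 + 1 := by positivity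
    rw [← mul_inv, Real.mul_self_sqrt hp.le, inv_mul_cancel₀ hp.ne']
  · simp
end
end
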